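/- arXiv:1909.04484 — 2 statements merged into one kernel-verified Lean document; each statement's English description precedes it below -/
import Mathlib

section
/- Let ε > 0 and take F(x) = x, so that for a probability measure μ on [0,1] with E_μ > 0 the dynamics is T_μ^ε(x) = (2 + ε(1/E_μ − 2))·x mod 1. Then the self-consistent system has at least two absolutely continuous invariant measures: Lebesgue measure λ is invariant, i.e. (T_λ^ε)_*λ = λ, and there exists a probability measure μ on [0,1] with μ ≪ λ, λ ≪ μ and μ ≠ λ such that (T_μ^ε)_*μ = μ. -/
open MeasureTheory

/-- Lebesgue measure on the interval `[0,1]`. -/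
noncomputable def lebI : Measure ℝ := volume.restrict (Set.Icc 0 1)

/-- `E_μ = ∫₀¹ x dμ(x)`. -/
noncomputable def Emu (μ : Measure ℝ) : ℝ := ∫ x in Set.Icc (0:ℝ) 1, x ∂μ

/-- The self-consistent dynamics `T_μ^ε(x) = (2 + ε F(1/E_μ − 2)) x mod 1`. -/
noncomputable def Tsc (ε : ℝ) (F : ℝ → ℝ) (μ : Measure ℝ) (x : ℝ) : ℝ :=
  Int.fract ((2 + ε * F (1 / Emu μ - 2)) * x)

/-!
For a measure of mean `E = ε / (2 * ε + β - 2)` the self-consistent map is `x ↦ β * x mod 1`, so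
it is enough to find a slope `β > 2` whose invariant density has exactly this mean. By Parry, every
sequence `1 = s 0, s 1, …` in `[0, 1]` with `β * s n - s (n + 1) ∈ ℕ` gives an invariant density
`∑ n, β⁻¹ ^ n • 1_[0, s n)`, with first moment about `E` equal to
`∑ n, β⁻¹ ^ n * (s n ^ 2 / 2 - E * s n)`. For the orbit of `1` and `β = 2 + δ` with `δ` small it is
negative: the deficit `1 / 2 - E` contributes at most `O(δ)`, whereas the orbit `1, δ, β * δ, …`
stays below `1 / 2` for a long time and every such step contributes less than a fixed negative
multiple of `δ`. For `β = 3` and the constant sequence `1` it is nonnegative.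

The orbit of `1` is discontinuous in `β`, but the set of all pairs `(β, s)` as above is compact and
the moment is continuous on it. Connectedness of the interval of slopes therefore gives one `β`
carrying two sequences with moments of opposite sign, and a positive combination of their
densities has moment zero.
-/

open Filter Topology ENNReal

theorem exists_fiber_le_ge_of_isPreconnected {X Y R : Type*} [TopologicalSpace X] [T2Space X]
    [TopologicalSpace Y] [T2Space Y] [LinearOrder R] [TopologicalSpace R] [OrderClosedTopology R]
    {π : Y → X} {K : Set Y} {S : Set X} {f : Y → R} {c : R} (hS : IsPreconnected S)
    (hK : IsCompact K) (hπ : Continuous π) (hf : ContinuousOn f K) (hSK : S ⊆ π '' K)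
    (hle : ∃ y ∈ K, π y ∈ S ∧ f y ≤ c) (hge : ∃ y ∈ K, π y ∈ S ∧ c ≤ f y) :
    ∃ x ∈ S, ∃ y ∈ K, ∃ z ∈ K, π y = x ∧ π z = x ∧ f y ≤ c ∧ c ≤ f z := by
  have isClosed_image {t : Set R} (ht : IsClosed t) : IsClosed (π '' (K ∩ f ⁻¹' t)) :=
    ((hK.of_isClosed_subset (hf.preimage_isClosed_of_isClosed hK.isClosed ht)
      Set.inter_subset_left).image hπ).isClosed
  have hcover : S ⊆ π '' (K ∩ f ⁻¹' Set.Iic c) ∪ π '' (K ∩ f ⁻¹' Set.Ici c) := fun x hx ↦ by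
    obtain ⟨y, hy, rfl⟩ := hSK hx
    exact (le_total (f y) c).imp (fun h ↦ ⟨y, ⟨hy, h⟩, rfl⟩) (fun h ↦ ⟨y, ⟨hy, h⟩, rfl⟩)
  obtain ⟨y₀, hy₀, hyS, hy₀c⟩ := hle
  obtain ⟨z₀, hz₀, hzS, hz₀c⟩ := hge
  obtain ⟨x, hx, ⟨y, ⟨hy, hyc⟩, hyx⟩, ⟨z, ⟨hz, hzc⟩, hzx⟩⟩ := isPreconnected_closed_iff.1 hS _ _
    (isClosed_image isClosed_Iic) (isClosed_image isClosed_Ici) hcover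
    ⟨π y₀, hyS, y₀, ⟨hy₀, hy₀c⟩, rfl⟩ ⟨π z₀, hzS, z₀, ⟨hz₀, hz₀c⟩, rfl⟩
  exact ⟨x, hx, y, hy, z, hz, hyx, hzx, hyc, hzc⟩

/-! ### Invariant measures equivalent to a reference measure -/

/-- `ν` is a finite `T`-invariant measure equivalent to the reference measure `ρ`. It is not
normalised, so that such measures are closed under addition. -/
structure IsEquivInvariant {α : Type*} [MeasurableSpace α] (ρ : Measure α) (T : α → α)
    (ν : Measure α) : Prop where
  isFiniteMeasure : IsFiniteMeasure ν
  absolutelyContinuous : ν ≪ ρ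
  absolutelyContinuous_symm : ρ ≪ ν
  measurePreserving : MeasurePreserving T ν ν

namespace IsEquivInvariant

variable {α : Type*} [MeasurableSpace α] {ρ ν ν' : Measure α} {T : α → α}

theorem add (hν : IsEquivInvariant ρ T ν) (hν' : IsEquivInvariant ρ T ν') :
    IsEquivInvariant ρ T (ν + ν') where
  isFiniteMeasure := by
    have := hν.isFiniteMeasure
    have := hν'.isFiniteMeasure
    infer_instance
  absolutelyContinuous := hν.absolutelyContinuous.add_left hν'.absolutelyContinuous
  absolutelyContinuous_symm := hν.absolutelyContinuous_symm.add_right ν'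
  measurePreserving := hν.measurePreserving.add_measure hν'.measurePreserving

theorem smul (hν : IsEquivInvariant ρ T ν) {c : ℝ≥0∞} (hc₀ : c ≠ 0) (hc : c ≠ ∞) :
    IsEquivInvariant ρ T (c • ν) where
  isFiniteMeasure := by
    have := hν.isFiniteMeasure
    exact ν.smul_finite hc
  absolutelyContinuous := Measure.smul_absolutelyContinuous.trans hν.absolutelyContinuous
  absolutelyContinuous_symm :=
    hν.absolutelyContinuous_symm.trans (Measure.absolutelyContinuous_smul hc₀)
  measurePreserving := hν.measurePreserving.smul_measure c

theorem exists_integral_eq_zero (hν : IsEquivInvariant ρ T ν) (hν' : IsEquivInvariant ρ T ν')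
    {f : α → ℝ} (hf : Integrable f ν) (hf' : Integrable f ν') (h : ∫ x, f x ∂ν ≤ 0)
    (h' : 0 ≤ ∫ x, f x ∂ν') : ∃ μ, IsEquivInvariant ρ T μ ∧ ∫ x, f x ∂μ = 0 := by
  rcases h.eq_or_lt with h | h
  · exact ⟨ν, hν, h⟩
  rcases h'.eq_or_lt with h' | h'
  · exact ⟨ν', hν', h'.symm⟩
  refine ⟨ENNReal.ofReal (∫ x, f x ∂ν') • ν + ENNReal.ofReal (-∫ x, f x ∂ν) • ν',
    (hν.smul (by simpa using h') ofReal_ne_top).add (hν'.smul (by simpa using h) ofReal_ne_top),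
    ?_⟩
  rw [integral_add_measure (hf.smul_measure ofReal_ne_top) (hf'.smul_measure ofReal_ne_top),
    integral_smul_measure, integral_smul_measure, toReal_ofReal h'.le,
    toReal_ofReal (neg_nonneg.2 h.le)]
  simp only [smul_eq_mul]
  ring

theorem exists_isProbabilityMeasure [NeZero ρ] (hν : IsEquivInvariant ρ T ν) {f : α → ℝ}
    (h : ∫ x, f x ∂ν = 0) :
    ∃ μ, IsEquivInvariant ρ T μ ∧ IsProbabilityMeasure μ ∧ ∫ x, f x ∂μ = 0 := by
  have := hν.isFiniteMeasure
  have : NeZero ν := ⟨fun hν₀ ↦ NeZero.ne ρ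
    (Measure.absolutelyContinuous_zero_iff.1 (hν₀ ▸ hν.absolutelyContinuous_symm))⟩
  refine ⟨(ν Set.univ)⁻¹ • ν, hν.smul (ENNReal.inv_ne_zero.2 (measure_ne_top ν _))
    (ENNReal.inv_ne_top.2 (NeZero.ne _)), isProbabilityMeasureSMul, ?_⟩
  rw [integral_smul_measure, h, smul_zero]

end IsEquivInvariant

/-! ### Means of measures on the unit interval -/

instance isProbabilityMeasure_lebI : IsProbabilityMeasure lebI := ⟨by simp [lebI]⟩

theorem ae_mem_Icc_of_absolutelyContinuous_lebI {μ : Measure ℝ} (hμ : μ ≪ lebI) :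
    ∀ᵐ x ∂μ, x ∈ Set.Icc (0 : ℝ) 1 :=
  hμ.ae_le (ae_restrict_mem measurableSet_Icc)

theorem integrable_id_of_absolutelyContinuous_lebI {μ : Measure ℝ} [IsFiniteMeasure μ]
    (hμ : μ ≪ lebI) : Integrable (fun x ↦ x) μ :=
  .of_mem_Icc 0 1 aemeasurable_id (ae_mem_Icc_of_absolutelyContinuous_lebI hμ)

theorem integrable_sub_of_absolutelyContinuous_lebI {μ : Measure ℝ} [IsFiniteMeasure μ]
    (hμ : μ ≪ lebI) (e : ℝ) : Integrable (fun x ↦ x - e) μ :=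
  (integrable_id_of_absolutelyContinuous_lebI hμ).sub (integrable_const e)

theorem integral_sub_eq_Emu_sub {μ : Measure ℝ} [IsProbabilityMeasure μ] (hμ : μ ≪ lebI) (e : ℝ) :
    ∫ x, (x - e) ∂μ = Emu μ - e := by
  rw [integral_sub (integrable_id_of_absolutelyContinuous_lebI hμ) (integrable_const e), Emu,
    Measure.restrict_eq_self_of_ae_mem (ae_mem_Icc_of_absolutelyContinuous_lebI hμ),
    integral_const, probReal_univ, one_smul]

theorem Emu_lebI : Emu lebI = 1 / 2 := by
  rw [Emu, lebI, Measure.restrict_restrict measurableSet_Icc, Set.inter_self,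
    integral_Icc_eq_integral_Ioc, ← intervalIntegral.integral_of_le zero_le_one, integral_id]
  norm_num

/-! ### The β-transformation -/

/-- The `β`-transformation `x ↦ β x mod 1`, which is the self-consistent map once the mean of the
measure is prescribed. It is defined on all of `ℝ` to match `Tsc`. -/
noncomputable def betaMap (β x : ℝ) : ℝ := Int.fract (β * x)

theorem measurable_betaMap (β : ℝ) : Measurable (betaMap β) :=
  measurable_fract.comp (measurable_const_mul β)

theorem iterate_betaMap_of_lt_one {β x : ℝ} {n : ℕ} (hβ : 1 ≤ β) (hx : 0 ≤ x)
    (h : β ^ n * x < 1) : (betaMap β)^[n] x = β ^ n * x := by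
  induction n with
  | zero => simp
  | succ n ih =>
    have hlt : β ^ n * x < 1 := lt_of_le_of_lt (by gcongr; exact n.le_succ) h
    rw [Function.iterate_succ_apply', ih hlt, betaMap, ← mul_assoc, ← pow_succ',
      Int.fract_eq_self.2 ⟨by positivity, h⟩]

theorem iterate_succ_betaMap_one {β : ℝ} {n : ℕ} (hβ : 1 ≤ β) (h : β ^ n * Int.fract β < 1) :
    (betaMap β)^[n + 1] 1 = β ^ n * Int.fract β := by
  rw [Function.iterate_succ_apply, betaMap, mul_one,
    iterate_betaMap_of_lt_one hβ (Int.fract_nonneg β) h]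

/-- Lebesgue measure on `[0, s)`, half-open so that consecutive translates tile the line without
overlap. -/
noncomputable abbrev lebIco (s : ℝ) : Measure ℝ := volume.restrict (Set.Ico 0 s)

theorem lebIco_one : lebIco 1 = lebI :=
  Measure.restrict_congr_set Ico_ae_eq_Icc

theorem map_fract_restrict_Ico_intCast (m : ℤ) {s : ℝ} (hs : s ≤ 1) :
    (volume.restrict (Set.Ico (m : ℝ) (m + s))).map Int.fract = lebIco s := by
  have hfract : Int.fract =ᵐ[volume.restrict (Set.Ico (m : ℝ) (m + s))] (· - (m : ℝ)) := by
    filter_upwards [ae_restrict_mem measurableSet_Ico] with x hx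
    rw [Int.fract, Int.floor_eq_iff.2 ⟨hx.1, by linarith [hx.2]⟩]
  have hpre : (· - (m : ℝ)) ⁻¹' Set.Ico 0 s = Set.Ico (m : ℝ) (m + s) := by
    simp [add_comm]
  rw [Measure.map_congr hfract, ← hpre]
  exact ((measurePreserving_sub_right volume (m : ℝ)).restrict_preimage measurableSet_Ico).map_eq

theorem lebIco_natCast_add (k : ℕ) {s : ℝ} (hs : 0 ≤ s) :
    lebIco (k + s) = lebIco k + volume.restrict (Set.Ico (k : ℝ) (k + s)) := by
  rw [lebIco, ← Set.Ico_union_Ico_eq_Ico k.cast_nonneg (le_add_of_nonneg_right hs),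
    Measure.restrict_union (Set.Ico_disjoint_Ico_same) measurableSet_Ico]

theorem map_fract_lebIco_natCast (k : ℕ) :
    (lebIco k).map Int.fract = (k : ℝ≥0∞) • lebI := by
  induction k with
  | zero => simp [lebIco]
  | succ k ih =>
    rw [Nat.cast_succ, lebIco_natCast_add k zero_le_one, Measure.map_add _ _ measurable_fract, ih,
      ← lebIco_one, Nat.cast_succ, add_smul, one_smul]
    exact congrArg _ (mod_cast map_fract_restrict_Ico_intCast k le_rfl)

theorem map_fract_lebIco_natCast_add (k : ℕ) {s : ℝ} (hs : s ∈ Set.Icc 0 1) :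
    (lebIco (k + s)).map Int.fract = (k : ℝ≥0∞) • lebI + lebIco s := by
  rw [lebIco_natCast_add k hs.1, Measure.map_add _ _ measurable_fract, map_fract_lebIco_natCast]
  exact congrArg _ (mod_cast map_fract_restrict_Ico_intCast k hs.2)

theorem map_mul_left_lebIco {β : ℝ} (hβ : 0 < β) (s : ℝ) :
    (lebIco s).map (β * ·) = ENNReal.ofReal β⁻¹ • lebIco (β * s) := by
  have hpre : (β * ·) ⁻¹' Set.Ico 0 (β * s) = Set.Ico 0 s := by
    simp [Set.preimage_const_mul_Ico₀ _ _ hβ, hβ.ne']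
  rw [lebIco, ← hpre, ← Measure.restrict_map (measurable_const_mul β) measurableSet_Ico,
    Real.map_volume_mul_left hβ.ne', abs_of_pos (inv_pos.2 hβ), Measure.restrict_smul]

theorem map_betaMap_lebIco {β s s' : ℝ} {k : ℕ} (hβ : 0 < β) (hs' : s' ∈ Set.Icc 0 1)
    (h : β * s = k + s') :
    (lebIco s).map (betaMap β) = ENNReal.ofReal β⁻¹ • ((k : ℝ≥0∞) • lebI + lebIco s') := by
  have hcomp : betaMap β = Int.fract ∘ (β * ·) := rfl
  rw [hcomp, ← Measure.map_map measurable_fract (measurable_const_mul β), map_mul_left_lebIco hβ,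
    Measure.map_smul, h, map_fract_lebIco_natCast_add k hs']

theorem measurePreserving_betaMap_natCast {k : ℕ} (hk : k ≠ 0) :
    MeasurePreserving (betaMap k) lebI lebI where
  measurable := measurable_betaMap k
  map_eq := by
    have hk' : (0 : ℝ) < k := by positivity
    conv_lhs => rw [← lebIco_one]
    rw [map_betaMap_lebIco hk' ⟨le_rfl, zero_le_one⟩ (k := k) (by ring), lebIco, Set.Ico_self,
      Measure.restrict_empty, add_zero, smul_smul, ENNReal.ofReal_inv_of_pos hk', ofReal_natCast,
      ENNReal.inv_mul_cancel (by exact_mod_cast hk) (natCast_ne_top k), one_smul]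

/-! ### Remainders of β-expansions and Parry measures -/

/-- `s` is the sequence of remainders of a `β`-expansion of `1`: the digits `β * s n - s (n + 1)`
are natural numbers, and any digits are allowed that keep the remainders in the closed interval
`[0, 1]`. The greedy expansion has the orbit of `1` under `betaMap β` as remainders. -/
structure IsBetaRemainder (β : ℝ) (s : ℕ → ℝ) : Prop where
  zero : s 0 = 1
  mem_Icc : ∀ n, s n ∈ Set.Icc 0 1
  digit : ∀ n, β * s n - s (n + 1) ∈ Set.range ((↑) : ℕ → ℝ)

theorem isBetaRemainder_iterate_betaMap {β : ℝ} (hβ : 0 ≤ β) :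
    IsBetaRemainder β fun n ↦ (betaMap β)^[n] 1 := by
  have hmem (n : ℕ) : (betaMap β)^[n] 1 ∈ Set.Icc (0 : ℝ) 1 := by
    cases n with
    | zero => simp
    | succ n =>
      rw [Function.iterate_succ_apply']
      exact ⟨Int.fract_nonneg _, (Int.fract_lt_one _).le⟩
  refine ⟨rfl, hmem, fun n ↦ ⟨⌊β * (betaMap β)^[n] 1⌋₊, ?_⟩⟩
  rw [natCast_floor_eq_intCast_floor (mul_nonneg hβ (hmem n).1), Function.iterate_succ_apply',
    betaMap, Int.self_sub_fract]

theorem isBetaRemainder_one {k : ℕ} (hk : 1 ≤ k) : IsBetaRemainder k fun _ ↦ 1 where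
  zero := rfl
  mem_Icc _ := ⟨zero_le_one, le_rfl⟩
  digit _ := ⟨k - 1, by push_cast [hk]; ring⟩

/-- The pairs of a base `β ∈ B` and the remainders of a `β`-expansion of `1`. In contrast to the
orbit of `1`, which is a discontinuous section of it, this set is closed when `B` is. -/
def betaRemainderPairs (B : Set ℝ) : Set (ℝ × (ℕ → ℝ)) :=
  {p | p.1 ∈ B ∧ IsBetaRemainder p.1 p.2}

theorem isCompact_betaRemainderPairs {B : Set ℝ} (hB : IsCompact B) :
    IsCompact (betaRemainderPairs B) := by
  have hcube : IsCompact (B ×ˢ Set.univ.pi fun _ : ℕ ↦ Set.Icc (0 : ℝ) 1) :=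
    hB.prod (isCompact_univ_pi fun _ ↦ isCompact_Icc)
  have heq : betaRemainderPairs B =
      (B ×ˢ Set.univ.pi fun _ : ℕ ↦ Set.Icc (0 : ℝ) 1) ∩ ({p | p.2 0 = 1} ∩
        ⋂ n, {p | p.1 * p.2 n - p.2 (n + 1) ∈ Set.range ((↑) : ℕ → ℝ)}) := by
    ext p
    simp only [betaRemainderPairs, Set.mem_ofPred_eq, Set.mem_inter_iff, Set.mem_prod,
      Set.mem_univ_pi, Set.mem_iInter]
    exact ⟨fun ⟨h, h'⟩ ↦ ⟨⟨h, h'.mem_Icc⟩, h'.zero, h'.digit⟩,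
      fun ⟨⟨h, h'⟩, h₀, hd⟩ ↦ ⟨h, h₀, h', hd⟩⟩
  rw [heq]
  refine hcube.inter_right (.inter (isClosed_eq (by fun_prop) (by fun_prop)) ?_)
  exact isClosed_iInter fun n ↦ Nat.isClosedEmbedding_coe_real.isClosed_range.preimage
    (f := fun p : ℝ × (ℕ → ℝ) ↦ p.1 * p.2 n - p.2 (n + 1)) (by fun_prop)

/-- Parry's invariant measure for `betaMap β`, not normalised, with density
`∑ n, β⁻¹ ^ n • 1_[0, s n)`. Parry takes for `s` the orbit of `1`. -/
noncomputable def parryMeasure (β : ℝ) (s : ℕ → ℝ) : Measure ℝ :=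
  Measure.sum fun n ↦ ENNReal.ofReal (β⁻¹ ^ n) • lebIco (s n)

namespace IsBetaRemainder

variable {β : ℝ} {s : ℕ → ℝ}

theorem hasSum_digits (hs : IsBetaRemainder β s) (hβ : 1 < β) {k : ℕ → ℕ}
    (hk : ∀ n, (k n : ℝ) = β * s n - s (n + 1)) :
    HasSum (fun n ↦ β⁻¹ ^ (n + 1) * (k n : ℝ)) 1 := by
  have : 0 < β := by linarith
  have htelescope (n : ℕ) :
      β⁻¹ ^ (n + 1) * (k n : ℝ) = β⁻¹ ^ n * s n - β⁻¹ ^ (n + 1) * s (n + 1) := by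
    rw [hk, pow_succ]
    field_simp
  have hlim : Tendsto (fun n ↦ β⁻¹ ^ n * s n) atTop (𝓝 0) :=
    squeeze_zero (fun n ↦ mul_nonneg (by positivity) (hs.mem_Icc n).1)
      (fun n ↦ mul_le_of_le_one_right (by positivity) (hs.mem_Icc n).2)
      (tendsto_pow_atTop_nhds_zero_of_lt_one (by positivity) (inv_lt_one_of_one_lt₀ hβ))
  rw [hasSum_iff_tendsto_nat_of_nonneg fun n ↦ by positivity]
  simp_rw [htelescope, Finset.sum_range_sub' fun n ↦ β⁻¹ ^ n * s n]
  simpa [hs.zero] using hlim.const_sub 1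

theorem map_betaMap_parryMeasure (hs : IsBetaRemainder β s) (hβ : 1 < β) :
    (parryMeasure β s).map (betaMap β) = parryMeasure β s := by
  have hβ₀ : 0 < β := by linarith
  choose k hk using hs.digit
  have hdigits : ∑' n, ENNReal.ofReal (β⁻¹ ^ (n + 1)) * (k n : ℝ≥0∞) = 1 := by
    have h := hs.hasSum_digits hβ hk
    rw [← ofReal_one, ← h.tsum_eq, ofReal_tsum_of_nonneg (fun n ↦ by positivity) h.summable]
    exact tsum_congr fun n ↦ by rw [ofReal_mul (by positivity), ofReal_natCast]
  have hmap (n : ℕ) : (ENNReal.ofReal (β⁻¹ ^ n) • lebIco (s n)).map (betaMap β) =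
      (ENNReal.ofReal (β⁻¹ ^ (n + 1)) * (k n : ℝ≥0∞)) • lebI +
        ENNReal.ofReal (β⁻¹ ^ (n + 1)) • lebIco (s (n + 1)) := by
    rw [Measure.map_smul, map_betaMap_lebIco hβ₀ (hs.mem_Icc (n + 1)) (k := k n)
      (by linarith [hk n]), smul_smul, ← ofReal_mul (by positivity), ← pow_succ, smul_add,
      smul_smul]
  rw [parryMeasure, Measure.map_sum (measurable_betaMap β).aemeasurable]
  simp_rw [hmap]
  ext A hA
  simp only [Measure.sum_apply _ hA, Measure.add_apply, Measure.smul_apply, smul_eq_mul]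
  rw [ENNReal.tsum_add, ENNReal.tsum_mul_right, hdigits, one_mul, ← lebIco_one,
    tsum_eq_zero_add' (f := fun n ↦ ENNReal.ofReal (β⁻¹ ^ n) * lebIco (s n) A) ENNReal.summable]
  simp only [pow_zero, ofReal_one, one_mul, hs.zero]

theorem isFiniteMeasure_parryMeasure (hs : IsBetaRemainder β s) (hβ : 1 < β) :
    IsFiniteMeasure (parryMeasure β s) where
  measure_univ_lt_top := by
    have := one_pos.trans hβ
    calc parryMeasure β s Set.univ
        = ∑' n, ENNReal.ofReal (β⁻¹ ^ n * s n) := by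
          simp [parryMeasure, ofReal_mul, (one_pos.trans hβ).le]
      _ ≤ ∑' n, ENNReal.ofReal (β⁻¹ ^ n) := ENNReal.tsum_le_tsum fun n ↦
          ofReal_le_ofReal (mul_le_of_le_one_right (by positivity) (hs.mem_Icc n).2)
      _ < ∞ := (summable_geometric_of_lt_one (by positivity)
          (inv_lt_one_of_one_lt₀ hβ)).tsum_ofReal_lt_top

theorem isEquivInvariant_parryMeasure (hs : IsBetaRemainder β s) (hβ : 1 < β) :
    IsEquivInvariant lebI (betaMap β) (parryMeasure β s) where
  isFiniteMeasure := hs.isFiniteMeasure_parryMeasure hβ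
  absolutelyContinuous := Measure.absolutelyContinuous_sum_left fun n ↦ by
    rw [← lebIco_one]
    exact Measure.smul_absolutelyContinuous.trans
      (Measure.absolutelyContinuous_of_le <|
        Measure.restrict_mono (Set.Ico_subset_Ico_right (hs.mem_Icc n).2) le_rfl)
  absolutelyContinuous_symm := Measure.absolutelyContinuous_sum_right 0 <| by
    rw [hs.zero, lebIco_one, pow_zero, ofReal_one, one_smul]
  measurePreserving := ⟨measurable_betaMap β, hs.map_betaMap_parryMeasure hβ⟩

end IsBetaRemainder

/-! ### First moments of Parry measures -/

/-- The first moment about `e` of the (unnormalised) Parry measure, which vanishes exactly when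
its barycentre is `e`. -/
noncomputable def parryMoment (e β : ℝ) (s : ℕ → ℝ) : ℝ := ∫ x, (x - e) ∂parryMeasure β s

theorem integral_sub_lebIco (e : ℝ) {s : ℝ} (hs : 0 ≤ s) :
    ∫ x, (x - e) ∂lebIco s = s ^ 2 / 2 - e * s := by
  rw [lebIco, integral_Ico_eq_integral_Ioc, ← intervalIntegral.integral_of_le hs,
    intervalIntegral.integral_sub (by simp) (by simp), integral_id,
    intervalIntegral.integral_const, smul_eq_mul]
  ring

theorem IsBetaRemainder.hasSum_parryMoment {β : ℝ} {s : ℕ → ℝ} (hs : IsBetaRemainder β s)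
    (hβ : 1 < β) (e : ℝ) :
    HasSum (fun n ↦ β⁻¹ ^ n * (s n ^ 2 / 2 - e * s n)) (parryMoment e β s) := by
  have hν := hs.isEquivInvariant_parryMeasure hβ
  have := hν.isFiniteMeasure
  have hterm (n : ℕ) : ∫ x, (x - e) ∂(ENNReal.ofReal (β⁻¹ ^ n) • lebIco (s n)) =
      β⁻¹ ^ n * (s n ^ 2 / 2 - e * s n) := by
    rw [integral_smul_measure, integral_sub_lebIco e (hs.mem_Icc n).1, smul_eq_mul,
      toReal_ofReal (by positivity)]
  simp_rw [← hterm]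
  exact hasSum_integral_measure
    (integrable_sub_of_absolutelyContinuous_lebI hν.absolutelyContinuous e)

theorem norm_inv_pow_mul_le {a β e x C : ℝ} (ha : 0 < a) (hβ : a ≤ β) (hx : x ∈ Set.Icc 0 1)
    (he : ‖e‖ ≤ C) (n : ℕ) : ‖β⁻¹ ^ n * (x ^ 2 / 2 - e * x)‖ ≤ a⁻¹ ^ n * (1 / 2 + C) := by
  have hβ₀ : 0 < β := ha.trans_le hβ
  have hpow : ‖β⁻¹ ^ n‖ ≤ a⁻¹ ^ n := by
    rw [Real.norm_of_nonneg (by positivity)]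
    gcongr
  have hsq : ‖x ^ 2 / 2‖ ≤ 1 / 2 := by
    rw [Real.norm_of_nonneg (by positivity)]
    gcongr
    exact pow_le_one₀ hx.1 hx.2
  have hmul : ‖e * x‖ ≤ C := by
    rw [norm_mul, Real.norm_of_nonneg hx.1]
    exact (mul_le_of_le_one_right (norm_nonneg _) hx.2).trans he
  exact norm_mul_le_of_le hpow (norm_sub_le_of_le hsq hmul)

theorem continuousOn_parryMoment {e : ℝ → ℝ} {a b : ℝ} (ha : 1 < a)
    (he : ContinuousOn e (Set.Icc a b)) :
    ContinuousOn (fun p : ℝ × (ℕ → ℝ) ↦ parryMoment (e p.1) p.1 p.2)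
      (betaRemainderPairs (Set.Icc a b)) := by
  have ha₀ : 0 < a := by linarith
  obtain ⟨C, hC⟩ := isCompact_Icc.exists_bound_of_continuousOn he
  have hseries : ContinuousOn
      (fun p : ℝ × (ℕ → ℝ) ↦ ∑' n, p.1⁻¹ ^ n * (p.2 n ^ 2 / 2 - e p.1 * p.2 n))
      (betaRemainderPairs (Set.Icc a b)) := by
    refine continuousOn_tsum (u := fun n ↦ a⁻¹ ^ n * (1 / 2 + C)) (fun n ↦ ?_)
      ((summable_geometric_of_lt_one (by positivity) (inv_lt_one_of_one_lt₀ ha)).mul_right _) ?_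
    · have he' : ContinuousOn (fun p : ℝ × (ℕ → ℝ) ↦ e p.1)
          (betaRemainderPairs (Set.Icc a b)) :=
        he.comp continuousOn_fst fun p hp ↦ hp.1
      have hne : ∀ p ∈ betaRemainderPairs (Set.Icc a b), p.1 ≠ 0 :=
        fun p hp ↦ (ha₀.trans_le hp.1.1).ne'
      exact ((continuousOn_fst.inv₀ hne).pow n).mul
        (ContinuousOn.sub (by fun_prop) (he'.mul (by fun_prop)))
    · exact fun n p hp ↦ norm_inv_pow_mul_le ha₀ hp.1.1 (hp.2.mem_Icc n) (hC p.1 hp.1) n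
  exact hseries.congr fun p hp ↦ (hp.2.hasSum_parryMoment (ha.trans_le hp.1.1) _).tsum_eq.symm

theorem exists_parryMoment_nonpos_nonneg {e : ℝ → ℝ} {a b : ℝ} {s t : ℕ → ℝ} (ha : 1 < a)
    (hab : a ≤ b) (he : ContinuousOn e (Set.Icc a b)) (hs : IsBetaRemainder a s)
    (ht : IsBetaRemainder b t) (hsa : parryMoment (e a) a s ≤ 0)
    (htb : 0 ≤ parryMoment (e b) b t) :
    ∃ β ∈ Set.Icc a b, ∃ s t, IsBetaRemainder β s ∧ IsBetaRemainder β t ∧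
      parryMoment (e β) β s ≤ 0 ∧ 0 ≤ parryMoment (e β) β t := by
  have hfiber : Set.Icc a b ⊆ Prod.fst '' betaRemainderPairs (Set.Icc a b) := fun β hβ ↦
    ⟨(β, fun n ↦ (betaMap β)^[n] 1),
      ⟨hβ, isBetaRemainder_iterate_betaMap (by linarith [hβ.1])⟩, rfl⟩
  have hab' := Set.left_mem_Icc.2 hab
  have hba' := Set.right_mem_Icc.2 hab
  obtain ⟨β, hβ, ⟨_, s⟩, hs, ⟨_, t⟩, ht, rfl, rfl, h⟩ := exists_fiber_le_ge_of_isPreconnected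
    isPreconnected_Icc (isCompact_betaRemainderPairs isCompact_Icc) continuous_fst
    (continuousOn_parryMoment ha he) hfiber ⟨(a, s), ⟨hab', hs⟩, hab', hsa⟩
    ⟨(b, t), ⟨hba', ht⟩, hba', htb⟩
  exact ⟨_, hβ, s, t, hs.2, ht.2, h⟩

theorem exists_isEquivInvariant_betaMap_Emu_eq {e β : ℝ} {s t : ℕ → ℝ} (hβ : 1 < β)
    (hs : IsBetaRemainder β s) (ht : IsBetaRemainder β t) (hse : parryMoment e β s ≤ 0)
    (hte : 0 ≤ parryMoment e β t) :
    ∃ μ, IsEquivInvariant lebI (betaMap β) μ ∧ IsProbabilityMeasure μ ∧ Emu μ = e := by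
  have hν := hs.isEquivInvariant_parryMeasure hβ
  have hν' := ht.isEquivInvariant_parryMeasure hβ
  have := hν.isFiniteMeasure
  have := hν'.isFiniteMeasure
  obtain ⟨ν, hν, hν₀⟩ := hν.exists_integral_eq_zero hν'
    (integrable_sub_of_absolutelyContinuous_lebI hν.absolutelyContinuous e)
    (integrable_sub_of_absolutelyContinuous_lebI hν'.absolutelyContinuous e) hse hte
  obtain ⟨μ, hμ, hprob, hμ₀⟩ := hν.exists_isProbabilityMeasure hν₀
  rw [integral_sub_eq_Emu_sub hμ.absolutelyContinuous] at hμ₀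
  exact ⟨μ, hμ, hprob, sub_eq_zero.1 hμ₀⟩

theorem IsBetaRemainder.parryMoment_le {e β : ℝ} {s : ℕ → ℝ} (hs : IsBetaRemainder β s)
    (hβ : 1 < β) (he : e ≤ 1 / 2) (t : Finset ℕ) :
    parryMoment e β s ≤
      (1 / 2 - e) * (1 - β⁻¹)⁻¹ - ∑ n ∈ t, β⁻¹ ^ n * (s n * (1 - s n) / 2) := by
  have : 0 < β := by linarith
  have hgap := ((hasSum_geometric_of_lt_one (by positivity)
    (inv_lt_one_of_one_lt₀ hβ)).mul_left (1 / 2 - e)).sub (hs.hasSum_parryMoment hβ e)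
  have hterm (n : ℕ) : β⁻¹ ^ n * (s n * (1 - s n) / 2) ≤
      (1 / 2 - e) * β⁻¹ ^ n - β⁻¹ ^ n * (s n ^ 2 / 2 - e * s n) := by
    have hsplit : (1 / 2 - e) * β⁻¹ ^ n - β⁻¹ ^ n * (s n ^ 2 / 2 - e * s n) =
        β⁻¹ ^ n * (s n * (1 - s n) / 2) + β⁻¹ ^ n * ((1 / 2 - e) * (1 - s n)) := by ring
    rw [hsplit]
    have : 0 ≤ 1 - s n := sub_nonneg.2 (hs.mem_Icc n).2
    have : 0 ≤ 1 / 2 - e := sub_nonneg.2 he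
    exact le_add_of_nonneg_right (by positivity)
  have hnonneg (n : ℕ) : 0 ≤ β⁻¹ ^ n * (s n * (1 - s n) / 2) := by
    have : 0 ≤ s n := (hs.mem_Icc n).1
    have : 0 ≤ 1 - s n := sub_nonneg.2 (hs.mem_Icc n).2
    positivity
  have hsum := (Finset.sum_le_sum fun n _ ↦ hterm n).trans
    (sum_le_hasSum t (fun n _ ↦ (hnonneg n).trans (hterm n)) hgap)
  linarith

theorem parryMoment_one_nonneg {e : ℝ} {k : ℕ} (hk : 1 < k) (he : e ≤ 1 / 2) :
    0 ≤ parryMoment e k fun _ ↦ 1 :=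
  ((isBetaRemainder_one hk.le).hasSum_parryMoment (mod_cast hk) e).nonneg fun n ↦
    mul_nonneg (by positivity) (by linarith)

/-! ### Self-consistent slopes -/

/-- The mean `E` that makes `β` self-consistent for `F = id`, i.e. the solution of
`β = 2 + ε * (1 / E - 2)`. -/
noncomputable def selfConsistentMean (ε β : ℝ) : ℝ := ε / (2 * ε + β - 2)

theorem Tsc_id_eq_betaMap {ε β : ℝ} (hε : ε ≠ 0) {μ : Measure ℝ}
    (hμ : Emu μ = selfConsistentMean ε β) : Tsc ε id μ = betaMap β := by
  have hslope : 2 + ε * (1 / selfConsistentMean ε β - 2) = β := by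
    rw [selfConsistentMean, one_div_div]
    field_simp
    ring
  funext x
  rw [Tsc, id, hμ, hslope, betaMap]

theorem selfConsistentMean_two {ε : ℝ} (hε : ε ≠ 0) : selfConsistentMean ε 2 = 1 / 2 := by
  rw [selfConsistentMean]
  field_simp
  norm_num [hε]

theorem half_sub_selfConsistentMean {ε β : ℝ} (h : 2 * ε + β - 2 ≠ 0) :
    1 / 2 - selfConsistentMean ε β = (β - 2) / (2 * (2 * ε + β - 2)) := by
  rw [selfConsistentMean]
  field_simp
  ring

theorem selfConsistentMean_lt_half {ε β : ℝ} (hε : 0 < ε) (hβ : 2 < β) :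
    selfConsistentMean ε β < 1 / 2 := by
  have h : 0 < 2 * ε + β - 2 := by linarith
  rw [← sub_pos, half_sub_selfConsistentMean h.ne']
  have : 0 < β - 2 := sub_pos.2 hβ
  positivity

theorem continuousOn_selfConsistentMean {ε : ℝ} (hε : 0 < ε) :
    ContinuousOn (selfConsistentMean ε) (Set.Ici 2) := by
  have hne : ∀ β ∈ Set.Ici (2 : ℝ), 2 * ε + β - 2 ≠ 0 := fun β hβ ↦ by
    have : 2 ≤ β := hβ
    linarith
  unfold selfConsistentMean
  fun_prop (disch := assumption)

theorem natCast_mul_le_sum_iterate_betaMap_two_add {δ : ℝ} {N : ℕ} (hδ : 0 < δ)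
    (hδN : 3 ^ N * δ ≤ 1 / 2) :
    N * (δ / 12) ≤ ∑ n ∈ Finset.range (N + 1),
      (2 + δ)⁻¹ ^ n * ((betaMap (2 + δ))^[n] 1 * (1 - (betaMap (2 + δ))^[n] 1) / 2) := by
  have hδ₁ : δ ≤ 1 / 2 := (le_mul_of_one_le_left hδ.le (one_le_pow₀ (by norm_num))).trans hδN
  have hfract : Int.fract (2 + δ) = δ := by
    rw [Int.fract_ofNat_add, Int.fract_eq_self.2 ⟨hδ.le, by linarith⟩]
  have hsmall {n : ℕ} (hn : n ∈ Finset.range N) : (2 + δ) ^ n * δ ≤ 1 / 2 :=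
    calc (2 + δ) ^ n * δ ≤ 3 ^ n * δ := by gcongr; linarith
      _ ≤ 3 ^ N * δ := by gcongr; exacts [by norm_num, (Finset.mem_range.1 hn).le]
      _ ≤ 1 / 2 := hδN
  have hterm : ∀ n ∈ Finset.range N, δ / 12 ≤ (2 + δ)⁻¹ ^ (n + 1) *
      ((betaMap (2 + δ))^[n + 1] 1 * (1 - (betaMap (2 + δ))^[n + 1] 1) / 2) := fun n hn ↦ by
    have hlt : (2 + δ) ^ n * Int.fract (2 + δ) < 1 := by
      rw [hfract]
      exact (hsmall hn).trans_lt (by norm_num)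
    rw [iterate_succ_betaMap_one (by linarith) hlt, hfract]
    calc δ / 12 = δ / 3 * 4⁻¹ := by ring
      _ ≤ δ / (2 + δ) * ((1 - (2 + δ) ^ n * δ) / 2) := by
          gcongr <;> linarith [hsmall hn]
      _ = (2 + δ)⁻¹ ^ (n + 1) * ((2 + δ) ^ n * δ * (1 - (2 + δ) ^ n * δ) / 2) := by
          rw [inv_pow, pow_succ]
          field_simp
  rw [Finset.sum_range_succ']
  simpa using Finset.card_nsmul_le_sum _ _ _ hterm

theorem half_sub_selfConsistentMean_mul_le {ε β : ℝ} (hε : 0 < ε) (hβ : 2 ≤ β) :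
    (1 / 2 - selfConsistentMean ε β) * (1 - β⁻¹)⁻¹ ≤ (β - 2) / (2 * ε) := by
  have hβ₂ : 0 ≤ β - 2 := sub_nonneg.2 hβ
  have hinv : β⁻¹ ≤ 2⁻¹ := inv_anti₀ two_pos hβ
  have hmean : 1 / 2 - selfConsistentMean ε β ≤ (β - 2) / (4 * ε) := by
    rw [half_sub_selfConsistentMean (by linarith)]
    exact div_le_div_of_nonneg_left hβ₂ (by positivity) (by linarith)
  have hgeom : (1 - β⁻¹)⁻¹ ≤ 2 := inv_le_of_inv_le₀ two_pos (by linarith)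
  calc (1 / 2 - selfConsistentMean ε β) * (1 - β⁻¹)⁻¹ ≤ (β - 2) / (4 * ε) * 2 := by
        gcongr
        exact inv_nonneg.2 (by linarith)
    _ = (β - 2) / (2 * ε) := by
        field_simp
        ring

theorem parryMoment_iterate_betaMap_two_add_nonpos {ε δ : ℝ} {N : ℕ} (hε : 0 < ε) (hδ : 0 < δ)
    (hN : 6 / ε ≤ N) (hδN : 3 ^ N * δ ≤ 1 / 2) :
    parryMoment (selfConsistentMean ε (2 + δ)) (2 + δ) (fun n ↦ (betaMap (2 + δ))^[n] 1) ≤ 0 := by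
  have hβ : 2 < 2 + δ := lt_add_of_pos_right 2 hδ
  have hbound := (isBetaRemainder_iterate_betaMap (zero_le_two.trans hβ.le)).parryMoment_le
    (one_lt_two.trans hβ) (selfConsistentMean_lt_half hε hβ).le (Finset.range (N + 1))
  have hloss := half_sub_selfConsistentMean_mul_le hε hβ.le
  have hgain := natCast_mul_le_sum_iterate_betaMap_two_add hδ hδN
  have hbalance : (2 + δ - 2) / (2 * ε) ≤ N * (δ / 12) := by
    calc (2 + δ - 2) / (2 * ε) = 6 / ε * (δ / 12) := by
          field_simp
          ring
      _ ≤ N * (δ / 12) := by gcongr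
  linarith

theorem exists_parryMoment_iterate_betaMap_nonpos {ε : ℝ} (hε : 0 < ε) :
    ∃ β ∈ Set.Ioc 2 3,
      parryMoment (selfConsistentMean ε β) β (fun n ↦ (betaMap β)^[n] 1) ≤ 0 := by
  obtain ⟨N, hN⟩ := exists_nat_ge (6 / ε)
  have hδ : (0 : ℝ) < (2 * 3 ^ N)⁻¹ := by positivity
  have hδN : (3 : ℝ) ^ N * (2 * 3 ^ N)⁻¹ = 1 / 2 := by field_simp
  have hδ₁ : (2 * 3 ^ N : ℝ)⁻¹ ≤ 1 :=
    inv_le_one_of_one_le₀ (by linarith [one_le_pow₀ (n := N) (by norm_num : (1 : ℝ) ≤ 3)])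
  exact ⟨2 + (2 * 3 ^ N)⁻¹, ⟨by linarith, by linarith⟩,
    parryMoment_iterate_betaMap_two_add_nonpos hε hδ hN hδN.le⟩

/-- For `F = id` and any `ε > 0`, the self-consistent system has at least two acims:
Lebesgue measure, and a probability measure equivalent to but different from Lebesgue. -/
theorem stmt0 (ε : ℝ) (hε : 0 < ε) :
    Measure.map (Tsc ε id lebI) lebI = lebI ∧
    ∃ μ : Measure ℝ, IsProbabilityMeasure μ ∧ μ ≪ lebI ∧ lebI ≪ μ ∧ μ ≠ lebI ∧
      Measure.map (Tsc ε id μ) μ = μ := by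
  refine ⟨?_, ?_⟩
  · rw [Tsc_id_eq_betaMap hε.ne' (Emu_lebI.trans (selfConsistentMean_two hε.ne').symm)]
    exact (measurePreserving_betaMap_natCast two_ne_zero).map_eq
  obtain ⟨a, ⟨ha₂, ha₃⟩, hmoment⟩ := exists_parryMoment_iterate_betaMap_nonpos hε
  obtain ⟨β, hβ, s, t, hs, ht, hse, hte⟩ := exists_parryMoment_nonpos_nonneg (by linarith) ha₃
    ((continuousOn_selfConsistentMean hε).mono fun _ hβ ↦ ha₂.le.trans hβ.1)
    (isBetaRemainder_iterate_betaMap (by linarith)) (isBetaRemainder_one (k := 3) (by norm_num))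
    hmoment (parryMoment_one_nonneg (by norm_num)
      (selfConsistentMean_lt_half hε (by norm_num)).le)
  have hβ₂ : 2 < β := ha₂.trans_le hβ.1
  obtain ⟨μ, hμ, hprob, hmean⟩ := exists_isEquivInvariant_betaMap_Emu_eq (by linarith) hs ht hse hte
  refine ⟨μ, hprob, hμ.absolutelyContinuous, hμ.absolutelyContinuous_symm, ?_, ?_⟩
  · rintro rfl
    exact (selfConsistentMean_lt_half hε hβ₂).ne (hmean.symm.trans Emu_lebI)
  · rw [Tsc_id_eq_betaMap hε.ne' hmean]
    exact hμ.measurePreserving.map_eq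
end

section
/- One has E(2) = 1/2, and there exists a constant K > 0 such that for every β with 2 < β < 3, |E(β) − 1/2| ≤ K·(β − 2)·(1 + |log(β − 2)|). -/
/-- The orbit of `1` under the β-map `T_β(x) = βx mod 1`: `t₀ = 1`,
`t_{n+1} = β t_n − ⌊β t_n⌋`. -/
noncomputable def betaOrbit (β : ℝ) : ℕ → ℝ
  | 0 => 1
  | n + 1 => Int.fract (β * betaOrbit β n)

/-- `E(β) = (∑ t_n(β)²/(2βⁿ)) / (∑ t_n(β)/βⁿ)`, the expectation of the unique acim of
the β-map. -/
noncomputable def Ebeta (β : ℝ) : ℝ :=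
  (∑' n : ℕ, (betaOrbit β n) ^ 2 / (2 * β ^ n)) / (∑' n : ℕ, betaOrbit β n / β ^ n)

/-!
Write `t n` for the orbit of `1` and let `A = ∑_{n ≥ 1} t n / β ^ n` and
`B = ∑_{n ≥ 1} t n ^ 2 / (2 β ^ n)`, so that `E(β) = (1 / 2 + B) / (1 + A)`. As `0 ≤ t n ≤ 1`,
we have `0 ≤ B ≤ A / 2`, and hence `|E(β) - 1 / 2| ≤ A / 2`. Each term of `A` is at most
`β ^ (-n)`, and also at most the fractional part `ε` of `β`, since `t 1 = ε` and the orbit grows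
by a factor at most `β` at each step. Using the second bound for the first `O(1 + |log ε|)` terms
and the first bound for all the others gives `A = O(ε (1 + |log ε|))`.
-/

section TsumBounds

variable {a : ℕ → ℝ} {ε r : ℝ}

lemma tsum_le_mul_add_geometric {C : ℝ} (ha : ∀ n, 0 ≤ a n) (haε : ∀ n, a n ≤ ε)
    (har : ∀ n, a n ≤ C * r ^ n) (hr₀ : 0 ≤ r) (hr₁ : r < 1) (N : ℕ) :
    ∑' n, a n ≤ N * ε + C * r ^ N * (1 - r)⁻¹ := by
  have hgeom : Summable fun n ↦ C * r ^ n := (summable_geometric_of_lt_one hr₀ hr₁).mul_left C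
  have hsum : Summable a := .of_nonneg_of_le ha har hgeom
  have hhead : ∑ n ∈ Finset.range N, a n ≤ N * ε := by
    simpa using Finset.sum_le_card_nsmul (Finset.range N) a ε fun n _ ↦ haε n
  have htail : ∑' n, a (n + N) ≤ C * r ^ N * (1 - r)⁻¹ :=
    calc ∑' n, a (n + N) ≤ ∑' n, C * r ^ (n + N) :=
          ((summable_nat_add_iff N).2 hsum).tsum_le_tsum (fun n ↦ har (n + N))
            ((summable_nat_add_iff N).2 hgeom)
      _ = ∑' n, C * r ^ N * r ^ n := by congr! 2 with n; ring
      _ = C * r ^ N * (1 - r)⁻¹ := by rw [tsum_mul_left, tsum_geometric_of_lt_one hr₀ hr₁]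
  rw [← hsum.sum_add_tsum_nat_add N]
  exact add_le_add hhead htail

lemma exists_pow_le_and_le_abs_log (hε : 0 < ε) (hr₀ : 0 < r) (hr₁ : r < 1) :
    ∃ N : ℕ, r ^ N ≤ ε ∧ N ≤ |Real.log r|⁻¹ * |Real.log ε| + 1 := by
  refine ⟨⌈|Real.logb r ε|⌉₊, ?_, ?_⟩
  · calc r ^ ⌈|Real.logb r ε|⌉₊ = r ^ (⌈|Real.logb r ε|⌉₊ : ℝ) := (Real.rpow_natCast _ _).symm
      _ ≤ r ^ Real.logb r ε :=
        Real.rpow_le_rpow_of_exponent_ge hr₀ hr₁.le ((le_abs_self _).trans (Nat.le_ceil _))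
      _ = ε := Real.rpow_logb hr₀ hr₁.ne hε
  · rw [← div_eq_inv_mul, ← abs_div]
    exact (Nat.ceil_lt_add_one (abs_nonneg _)).le

lemma tsum_le_mul_one_add_abs_log (ha : ∀ n, 0 ≤ a n) (haε : ∀ n, a n ≤ ε)
    (har : ∀ n, a n ≤ r ^ n) (hr₀ : 0 < r) (hr₁ : r < 1) :
    ∑' n, a n ≤ (1 + |Real.log r|⁻¹ + (1 - r)⁻¹) * ε * (1 + |Real.log ε|) := by
  obtain rfl | hε₀ := ((ha 0).trans (haε 0)).eq_or_lt
  · simpa using tsum_nonpos haε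
  obtain ⟨N, hrN, hN⟩ := exists_pow_le_and_le_abs_log hε₀ hr₀ hr₁
  have : 0 < 1 - r := sub_pos.2 hr₁
  calc ∑' n, a n ≤ N * ε + 1 * r ^ N * (1 - r)⁻¹ :=
        tsum_le_mul_add_geometric ha haε (by simpa only [one_mul] using har) hr₀.le hr₁ N
    _ ≤ (|Real.log r|⁻¹ * |Real.log ε| + 1) * ε + 1 * ε * (1 - r)⁻¹ := by gcongr
    _ ≤ (1 + |Real.log r|⁻¹ + (1 - r)⁻¹) * ε * (1 + |Real.log ε|) := by
        have hslack : 0 ≤ ε * (|Real.log ε| + |Real.log r|⁻¹ + (1 - r)⁻¹ * |Real.log ε|) := by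
          positivity
        linarith

end TsumBounds

lemma abs_half_add_div_one_add_sub_half_le {A B : ℝ} (hB : 0 ≤ B) (hBA : B ≤ A / 2) :
    |(1 / 2 + B) / (1 + A) - 1 / 2| ≤ A / 2 := by
  have hA : 0 ≤ A := by linarith
  have hdiff : (1 / 2 + B) / (1 + A) - 1 / 2 = -((A / 2 - B) / (1 + A)) := by
    field_simp
    ring
  rw [hdiff, abs_neg, abs_of_nonneg (div_nonneg (sub_nonneg.2 hBA) (by positivity))]
  calc (A / 2 - B) / (1 + A) ≤ A / 2 - B := div_le_self (sub_nonneg.2 hBA) (by linarith)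
    _ ≤ A / 2 := sub_le_self _ hB

section BetaOrbit

variable {β : ℝ}

lemma betaOrbit_nonneg (β : ℝ) : ∀ n, 0 ≤ betaOrbit β n
  | 0 => zero_le_one
  | _ + 1 => Int.fract_nonneg _

lemma betaOrbit_le_one (β : ℝ) : ∀ n, betaOrbit β n ≤ 1
  | 0 => le_rfl
  | _ + 1 => (Int.fract_lt_one _).le

lemma betaOrbit_succ_le_pow_mul_fract (hβ : 0 ≤ β) (n : ℕ) :
    betaOrbit β (n + 1) ≤ β ^ n * Int.fract β := by
  induction n with
  | zero => simp [betaOrbit]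
  | succ n ih =>
    have hfloor : 0 ≤ ⌊β * betaOrbit β (n + 1)⌋ :=
      Int.floor_nonneg.2 (mul_nonneg hβ (betaOrbit_nonneg β _))
    calc betaOrbit β (n + 2) ≤ β * betaOrbit β (n + 1) :=
          sub_le_self _ (Int.cast_nonneg hfloor)
      _ ≤ β * (β ^ n * Int.fract β) := by gcongr
      _ = β ^ (n + 1) * Int.fract β := by ring

lemma betaOrbit_div_pow_nonneg (hβ : 0 ≤ β) (n : ℕ) : 0 ≤ betaOrbit β n / β ^ n :=
  div_nonneg (betaOrbit_nonneg β n) (pow_nonneg hβ n)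

lemma betaOrbit_div_pow_le_inv_pow {b : ℝ} (hb : 0 < b) (hbβ : b ≤ β) (n : ℕ) :
    betaOrbit β n / β ^ n ≤ b⁻¹ ^ n := by
  rw [inv_pow, ← one_div]
  have := betaOrbit_le_one β n
  gcongr

lemma betaOrbit_succ_div_pow_le_fract (hβ : 1 ≤ β) (n : ℕ) :
    betaOrbit β (n + 1) / β ^ (n + 1) ≤ Int.fract β := by
  have hβ₀ : 0 < β := by positivity
  rw [div_le_iff₀' (by positivity)]
  calc betaOrbit β (n + 1) ≤ β ^ n * Int.fract β := betaOrbit_succ_le_pow_mul_fract hβ₀.le n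
    _ ≤ β ^ (n + 1) * Int.fract β :=
        mul_le_mul_of_nonneg_right (pow_le_pow_right₀ hβ n.le_succ) (Int.fract_nonneg β)

lemma summable_betaOrbit_div_pow (hβ : 1 < β) : Summable fun n ↦ betaOrbit β n / β ^ n :=
  have hβ₀ : 0 < β := by positivity
  .of_nonneg_of_le (betaOrbit_div_pow_nonneg hβ₀.le) (betaOrbit_div_pow_le_inv_pow hβ₀ le_rfl)
    (summable_geometric_of_lt_one (by positivity) (inv_lt_one_of_one_lt₀ hβ))

lemma betaOrbit_sq_div_le (hβ : 0 ≤ β) (n : ℕ) :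
    betaOrbit β n ^ 2 / (2 * β ^ n) ≤ betaOrbit β n / β ^ n / 2 := by
  rw [div_div, mul_comm (β ^ n)]
  have hsq : betaOrbit β n ^ 2 ≤ betaOrbit β n :=
    pow_le_of_le_one (betaOrbit_nonneg β n) (betaOrbit_le_one β n) two_ne_zero
  gcongr

lemma summable_betaOrbit_sq_div (hβ : 1 < β) :
    Summable fun n ↦ betaOrbit β n ^ 2 / (2 * β ^ n) :=
  .of_nonneg_of_le (fun n ↦ by positivity) (betaOrbit_sq_div_le (by positivity))
    ((summable_betaOrbit_div_pow hβ).div_const 2)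

lemma abs_Ebeta_sub_half_le (hβ : 1 < β) :
    |Ebeta β - 1 / 2| ≤ (∑' n, betaOrbit β (n + 1) / β ^ (n + 1)) / 2 := by
  have hA := summable_betaOrbit_div_pow hβ
  have hB := summable_betaOrbit_sq_div hβ
  have hE : Ebeta β = (1 / 2 + ∑' n, betaOrbit β (n + 1) ^ 2 / (2 * β ^ (n + 1))) /
      (1 + ∑' n, betaOrbit β (n + 1) / β ^ (n + 1)) := by
    rw [Ebeta, hA.tsum_eq_zero_add, hB.tsum_eq_zero_add]
    simp [betaOrbit]
  rw [hE]
  refine abs_half_add_div_one_add_sub_half_le (tsum_nonneg fun n ↦ by positivity) ?_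
  rw [← tsum_div_const]
  exact ((summable_nat_add_iff 1).2 hB).tsum_le_tsum (fun n ↦ betaOrbit_sq_div_le (by positivity) _)
    (((summable_nat_add_iff 1).2 hA).div_const 2)

end BetaOrbit

-- At an integer `β` the right-hand side vanishes whatever the value of `log 0`, so the bound
-- contains `E(β) = 1 / 2`.
theorem stmt3_general {b : ℝ} (hb : 1 < b) :
    ∃ K > (0 : ℝ), ∀ β : ℝ, b ≤ β →
      |Ebeta β - 1 / 2| ≤ K * Int.fract β * (1 + |Real.log (Int.fract β)|) := by
  have hb₀ : 0 < b := by positivity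
  have hb₁ : b⁻¹ < 1 := inv_lt_one_of_one_lt₀ hb
  have : 0 < 1 - b⁻¹ := sub_pos.2 hb₁
  refine ⟨(1 + |Real.log b⁻¹|⁻¹ + (1 - b⁻¹)⁻¹) / 2, by positivity, fun β hβ ↦ ?_⟩
  have hβ₁ : 1 < β := hb.trans_le hβ
  have hgeom (n : ℕ) : betaOrbit β (n + 1) / β ^ (n + 1) ≤ b⁻¹ ^ n :=
    (betaOrbit_div_pow_le_inv_pow hb₀ hβ (n + 1)).trans
      (pow_le_pow_of_le_one (by positivity) hb₁.le n.le_succ)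
  have htsum := tsum_le_mul_one_add_abs_log
    (fun n ↦ betaOrbit_div_pow_nonneg (by positivity) (n + 1))
    (betaOrbit_succ_div_pow_le_fract hβ₁.le) hgeom (by positivity) hb₁
  linarith [abs_Ebeta_sub_half_le hβ₁]

/-- Log-Lipschitz continuity of `β ↦ E(β)` at `β = 2`. -/
theorem stmt3 :
    Ebeta 2 = 1/2 ∧
    ∃ K > (0:ℝ), ∀ β : ℝ, 2 < β → β < 3 →
      |Ebeta β - 1/2| ≤ K * (β - 2) * (1 + |Real.log (β - 2)|) := by
  obtain ⟨K, hK, hE⟩ := stmt3_general one_lt_two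
  refine ⟨by simpa [sub_eq_zero] using hE 2 le_rfl, K, hK, fun β h₂ h₃ ↦ ?_⟩
  have hfract : Int.fract β = β - 2 := Int.fract_eq_iff.2 ⟨by linarith, by linarith, 2, by simp⟩
  exact hfract ▸ hE β h₂.le
end
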